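/- Let G be a connected graph of order n₁ and let n be an integer. If n ≥ 2n₁ ≥ 4 or n > 2n₁ = 2, then pd(G⊙K_{1,n}) = n. -/

import Mathlib

/-!
Write `C` for `G ⊙ K_{1,n}`. Its vertices are the vertices `v` of `G`, the star centers `c_v`,
and the `n` leaves attached to each copy.

Lower bound: the `n` leaves of one copy have the same neighbors (`v` and `c_v`), so two of them in
a common cell would have the same representation. They therefore lie in `n` distinct cells.

Upper bound: as `2 n₁ ≤ n`, fix an injective colouring of the `2 n₁` vertices `v`, `c_v` by `n`
colours, and in each copy give the `j`-th leaf the colour `j`. A vertex `v` or `c_v` is adjacent to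
leaves of all colours, so every colour other than its own is at distance `1`, while a leaf of the
copy at `v` has at distance `1` exactly the colours of `v` and `c_v` (other than its own).
Two vertices `v`, `c_v` never share a colour; two leaves of one colour lie in different copies,
whose pairs of distance-one colours are disjoint and nonempty; and a leaf misses some colour at
distance `1` that a `v` or `c_v` of its own colour would see, because `n ≥ 4` or
`n = 3`, `n₁ = 1`. Only the colours at distance `0` and `1` enter this argument
(`isResolvingPartition_fibers`).
-/

open SimpleGraph

/-- The corona product `G ⊙ H`: one copy of `G`, one copy of `H` for each vertex of `G`,
with the `i`-th vertex of `G` joined to every vertex of the `i`-th copy of `H`. -/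
def corona {α β : Type*} (G : SimpleGraph α) (H : SimpleGraph β) :
    SimpleGraph (α ⊕ α × β) :=
  SimpleGraph.fromRel (fun x y =>
    match x, y with
    | Sum.inl a, Sum.inl b => G.Adj a b
    | Sum.inl a, Sum.inr iu => a = iu.1
    | Sum.inr iu, Sum.inr jw => iu.1 = jw.1 ∧ H.Adj iu.2 jw.2
    | _, _ => False)

/-- The distance from a vertex to a set of vertices: `d(v,A) = min_{u ∈ A} d(v,u)`. -/
noncomputable def setDist {α : Type*} (G : SimpleGraph α) (v : α) (A : Set α) : ℕ :=
  sInf (G.dist v '' A)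

/-- `S` is a resolving set for `G`: distinct vertices have distinct metric representations. -/
def IsResolvingSet {α : Type*} (G : SimpleGraph α) (S : Set α) : Prop :=
  ∀ u v : α, (∀ w ∈ S, G.dist u w = G.dist v w) → u = v

/-- The metric dimension of `G`: minimum cardinality of a resolving set. -/
noncomputable def metricDim {α : Type*} (G : SimpleGraph α) : ℕ :=
  sInf {k | ∃ S : Set α, IsResolvingSet G S ∧ S.ncard = k}

/-- A family of sets is a resolving partition for `G` if it is a partition of the vertex set
into nonempty cells and distinct vertices have distinct partition representations. -/
def IsResolvingPartition {α : Type*} (G : SimpleGraph α) (P : Set (Set α)) : Prop :=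
  (∀ A ∈ P, A.Nonempty) ∧ (∀ v : α, ∃! A : Set α, A ∈ P ∧ v ∈ A) ∧
    ∀ u v : α, (∀ A ∈ P, setDist G u A = setDist G v A) → u = v

/-- The partition dimension of `G`: minimum number of cells in a resolving partition. -/
noncomputable def partitionDim {α : Type*} (G : SimpleGraph α) : ℕ :=
  sInf {t | ∃ P : Set (Set α), IsResolvingPartition G P ∧ P.ncard = t}

/-- `c(H)`: the maximum cardinality of a connected component of `H` which is isomorphic to a
complete graph (i.e. whose vertex set is a clique). -/
noncomputable def maxCompleteComp {β : Type*} (H : SimpleGraph β) : ℕ :=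
  sSup {k | ∃ C : H.ConnectedComponent, H.IsClique C.supp ∧ C.supp.ncard = k}

/-- `β(H)`: the number of isolated vertices of `H`. -/
noncomputable def numIsolated {β : Type*} (H : SimpleGraph β) : ℕ :=
  Set.ncard {v : β | ∀ u, ¬ H.Adj v u}

/-- `α(H)`: the number of connected components of `H` of order greater than one. -/
noncomputable def numBigComp {β : Type*} (H : SimpleGraph β) : ℕ :=
  Set.ncard {C : H.ConnectedComponent | 1 < C.supp.ncard}

section SetDist

variable {α : Type*} {C : SimpleGraph α}

/-- Connectedness matters: `dist` is `0` between vertices in different components. -/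
lemma setDist_eq_zero_iff (hC : C.Connected) {A : Set α} (hA : A.Nonempty) (u : α) :
    setDist C u A = 0 ↔ u ∈ A := by
  unfold setDist
  rw [Nat.sInf_eq_zero]
  constructor
  · rintro (⟨w, hw, h0⟩ | h)
    · rw [hC.dist_eq_zero_iff] at h0
      exact h0 ▸ hw
    · exact absurd h (hA.image _).ne_empty
  · intro hu
    exact Or.inl ⟨u, hu, by simp⟩

lemma setDist_eq_one_iff (hC : C.Connected) {A : Set α} (hA : A.Nonempty) {u : α} (hu : u ∉ A) :
    setDist C u A = 1 ↔ ∃ w ∈ A, C.Adj u w := by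
  constructor
  · intro h
    obtain ⟨w, hw, hd⟩ := Nat.sInf_mem (hA.image (C.dist u))
    refine ⟨w, hw, ?_⟩
    rw [← SimpleGraph.dist_eq_one_iff_adj, hd]
    exact h
  · rintro ⟨w, hw, hadj⟩
    have h1 : setDist C u A ≤ 1 :=
      Nat.sInf_le ⟨w, hw, SimpleGraph.dist_eq_one_iff_adj.2 hadj⟩
    have h0 : setDist C u A ≠ 0 := fun h => hu ((setDist_eq_zero_iff hC hA u).1 h)
    omega

lemma dist_le_of_neighbors (hC : C.Connected) {u v w : α} (hN : ∀ x, C.Adj v x → C.Adj u x)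
    (hw : w ≠ v) : C.dist u w ≤ C.dist v w := by
  obtain ⟨p, hp⟩ := hC.exists_walk_length_eq_dist v w
  cases p with
  | nil => exact absurd rfl hw
  | cons hadj q =>
    rw [← hp]
    exact SimpleGraph.dist_le (SimpleGraph.Walk.cons (hN _ hadj) q)

lemma setDist_le_of_neighbors (hC : C.Connected) {u v : α} {A : Set α} (hA : A.Nonempty)
    (hN : ∀ x, C.Adj v x → C.Adj u x) (hv : v ∉ A) : setDist C u A ≤ setDist C v A := by
  obtain ⟨w, hw, hd⟩ := Nat.sInf_mem (hA.image (C.dist v))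
  calc setDist C u A ≤ C.dist u w := Nat.sInf_le ⟨w, hw, rfl⟩
    _ ≤ C.dist v w := dist_le_of_neighbors hC hN (fun h => hv (h ▸ hw))
    _ = setDist C v A := hd

/-- Twins (vertices with the same neighbors) are separated by every resolving partition. -/
lemma IsResolvingPartition.eq_of_twins (hC : C.Connected) {P : Set (Set α)}
    (hP : IsResolvingPartition C P) {u v : α} (hN : ∀ x, C.Adj v x ↔ C.Adj u x)
    {A : Set α} (hA : A ∈ P) (hu : u ∈ A) (hv : v ∈ A) : u = v := by
  obtain ⟨hne, hpart, hres⟩ := hP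
  refine hres u v fun B hB => ?_
  by_cases hBA : B = A
  · subst hBA
    rw [(setDist_eq_zero_iff hC (hne B hB) u).2 hu, (setDist_eq_zero_iff hC (hne B hB) v).2 hv]
  · have huB : u ∉ B := fun h => hBA ((hpart u).unique ⟨hB, h⟩ ⟨hA, hu⟩)
    have hvB : v ∉ B := fun h => hBA ((hpart v).unique ⟨hB, h⟩ ⟨hA, hv⟩)
    exact le_antisymm (setDist_le_of_neighbors hC (hne B hB) (fun x => (hN x).1) hvB)
      (setDist_le_of_neighbors hC (hne B hB) (fun x => (hN x).2) huB)

/-- To show that the fibers of a surjective colouring form a resolving partition it is enough that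
a vertex is determined by its colour and the set of colours at distance one. -/
lemma isResolvingPartition_fibers (hC : C.Connected) {κ : Type*} (col : α → κ)
    (hsurj : Function.Surjective col)
    (hsep : ∀ u v, col u = col v →
      (∀ k, k ≠ col u → ((∃ w, col w = k ∧ C.Adj u w) ↔ ∃ w, col w = k ∧ C.Adj v w)) → u = v) :
    IsResolvingPartition C (Set.range fun k => {x | col x = k}) := by
  have hne : ∀ k, {x | col x = k}.Nonempty := hsurj
  refine ⟨?_, ?_, ?_⟩
  · rintro _ ⟨k, rfl⟩
    exact hne k
  · intro v
    refine ⟨{x | col x = col v}, ⟨⟨_, rfl⟩, rfl⟩, ?_⟩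
    rintro _ ⟨⟨k, rfl⟩, hk⟩
    have hk' : col v = k := hk
    simp [hk']
  · intro u v huv
    have hd : ∀ k, setDist C u {x | col x = k} = setDist C v {x | col x = k} :=
      fun k => huv _ ⟨k, rfl⟩
    have hcol : col u = col v := by
      have h0 := (setDist_eq_zero_iff hC (hne (col u)) u).2 rfl
      rw [hd] at h0
      exact ((setDist_eq_zero_iff hC (hne (col u)) v).1 h0).symm
    refine hsep u v hcol fun k hk => ?_
    have hu : u ∉ {x | col x = k} := fun h => hk (Eq.symm h)
    have hv : v ∉ {x | col x = k} := fun h => hk (hcol.trans h).symm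
    have h1 := setDist_eq_one_iff hC (hne k) hu
    have h2 := setDist_eq_one_iff hC (hne k) hv
    rw [hd] at h1
    exact h1.symm.trans h2

end SetDist

section Corona

variable {V β : Type*} {G : SimpleGraph V} {H : SimpleGraph β}

lemma corona_adj_inl_inl {a b : V} :
    (corona G H).Adj (Sum.inl a) (Sum.inl b) ↔ G.Adj a b := by
  simp only [corona, SimpleGraph.fromRel_adj, ne_eq, Sum.inl.injEq]
  exact ⟨fun h => h.2.elim id fun h => h.symm, fun h => ⟨h.ne, Or.inl h⟩⟩

lemma corona_adj_inl_inr {a : V} {x : V × β} :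
    (corona G H).Adj (Sum.inl a) (Sum.inr x) ↔ a = x.1 := by
  simp [corona, SimpleGraph.fromRel_adj]

lemma corona_adj_inr_inr {x y : V × β} :
    (corona G H).Adj (Sum.inr x) (Sum.inr y) ↔ x.1 = y.1 ∧ H.Adj x.2 y.2 := by
  simp only [corona, SimpleGraph.fromRel_adj, ne_eq, Sum.inr.injEq]
  constructor
  · rintro ⟨-, h | h⟩
    · exact h
    · exact ⟨h.1.symm, h.2.symm⟩
  · exact fun h => ⟨fun e => h.2.ne (by rw [e]), Or.inl h⟩

lemma corona_connected (hG : G.Connected) : (corona G H).Connected := by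
  obtain ⟨v₀⟩ := hG.nonempty
  let φ : G →g corona G H := ⟨Sum.inl, fun h => corona_adj_inl_inl.2 h⟩
  rw [SimpleGraph.connected_iff_exists_forall_reachable]
  refine ⟨Sum.inl v₀, ?_⟩
  have hV : ∀ a, (corona G H).Reachable (Sum.inl v₀) (Sum.inl a) :=
    fun a => (hG.preconnected v₀ a).map φ
  rintro (a | ⟨a, b⟩)
  · exact hV a
  · have hadj : (corona G H).Adj (Sum.inl a) (Sum.inr (a, b)) := corona_adj_inl_inr.2 rfl
    exact (hV a).trans hadj.reachable

end Corona

section Star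

variable {V : Type*} {G : SimpleGraph V} {n : ℕ}

/-- The neighbors of a leaf are its base vertex and the center of its star. -/
lemma leaf_adj_iff {v : V} {j : Fin n} {x : V ⊕ V × (Fin 1 ⊕ Fin n)} :
    (corona G (completeBipartiteGraph (Fin 1) (Fin n))).Adj (Sum.inr (v, Sum.inr j)) x ↔
      x = Sum.inl v ∨ x = Sum.inr (v, Sum.inl 0) := by
  rcases x with a | ⟨a, i | i⟩
  · rw [SimpleGraph.adj_comm, corona_adj_inl_inr]
    simp
  · rw [corona_adj_inr_inr]
    simp [Subsingleton.elim i 0, eq_comm]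
  · rw [corona_adj_inr_inr]
    simp

/-- The colouring of the corona which gives `v` and the center `c_v` the colours `f (v, false)` and
`f (v, true)`, and gives the `j`-th leaf of every copy the colour `j`. -/
def starColour (f : V × Bool → Fin n) : V ⊕ V × (Fin 1 ⊕ Fin n) → Fin n
  | Sum.inl v => f (v, false)
  | Sum.inr (v, Sum.inl _) => f (v, true)
  | Sum.inr (_, Sum.inr j) => j

/-- The vertex of `G` (for `false`) or the star center (for `true`) belonging to the copy at
`v`. -/
def hub : V × Bool → V ⊕ V × (Fin 1 ⊕ Fin n)
  | (v, false) => Sum.inl v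
  | (v, true) => Sum.inr (v, Sum.inl 0)

lemma starColour_hub (f : V × Bool → Fin n) (p : V × Bool) : starColour f (hub p) = f p := by
  rcases p with ⟨v, _ | _⟩ <;> rfl

lemma hub_or_leaf (x : V ⊕ V × (Fin 1 ⊕ Fin n)) :
    (∃ p, x = hub p) ∨ ∃ v j, x = Sum.inr (v, Sum.inr j) := by
  rcases x with a | ⟨a, i | j⟩
  · exact Or.inl ⟨(a, false), rfl⟩
  · exact Or.inl ⟨(a, true), by simp [hub, Subsingleton.elim i 0]⟩
  · exact Or.inr ⟨a, j, rfl⟩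

lemma exists_adj_hub (f : V × Bool → Fin n) (p : V × Bool) (k : Fin n) :
    ∃ w, starColour f w = k ∧
      (corona G (completeBipartiteGraph (Fin 1) (Fin n))).Adj (hub p) w := by
  refine ⟨Sum.inr (p.1, Sum.inr k), rfl, ?_⟩
  rw [SimpleGraph.adj_comm, leaf_adj_iff]
  rcases p with ⟨v, _ | _⟩ <;> simp [hub]

lemma exists_adj_leaf_iff (f : V × Bool → Fin n) (v : V) (j k : Fin n) :
    (∃ w, starColour f w = k ∧
      (corona G (completeBipartiteGraph (Fin 1) (Fin n))).Adj (Sum.inr (v, Sum.inr j)) w) ↔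
      f (v, false) = k ∨ f (v, true) = k := by
  simp only [leaf_adj_iff]
  constructor
  · rintro ⟨w, rfl, rfl | rfl⟩
    · exact Or.inl rfl
    · exact Or.inr rfl
  · rintro (h | h)
    · exact ⟨Sum.inl v, h, Or.inl rfl⟩
    · exact ⟨Sum.inr (v, Sum.inl 0), h, Or.inr rfl⟩

/-- Some colour differs from that of the hub `p` and from the two hub colours at `v`. Hence a leaf
at `v` with the colour of `p` does not see all other colours at distance one, whereas `p` does. -/
lemma exists_missing_colour [Fintype V] {f : V × Bool → Fin n}
    (h : 4 ≤ n ∨ (3 ≤ n ∧ Fintype.card V = 1)) (v : V) (p : V × Bool) :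
    ∃ k, k ≠ f p ∧ f (v, false) ≠ k ∧ f (v, true) ≠ k := by
  classical
  have hcard : ({f p, f (v, false), f (v, true)} : Finset (Fin n)).card < Fintype.card (Fin n) := by
    rw [Fintype.card_fin]
    rcases h with h | ⟨h, h1⟩
    · exact lt_of_le_of_lt Finset.card_le_three h
    · -- With a single copy, `p` is one of `v`, `c_v`, so only two colours are excluded.
      have hp : p.1 = v := (Fintype.card_le_one_iff.1 h1.le) _ _
      have hsub : ({f p, f (v, false), f (v, true)} : Finset (Fin n)) ⊆
          {f (v, false), f (v, true)} := by
        rcases p with ⟨w, _ | _⟩ <;> simp only at hp <;> subst hp <;> intro x <;> simp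
      exact lt_of_le_of_lt ((Finset.card_le_card hsub).trans Finset.card_le_two) h
  obtain ⟨k, hk⟩ : ∃ k, k ∉ ({f p, f (v, false), f (v, true)} : Finset (Fin n)) := by
    by_contra! hall
    rw [Finset.eq_univ_iff_forall.2 hall, Finset.card_univ] at hcard
    exact lt_irrefl _ hcard
  simp only [Finset.mem_insert, Finset.mem_singleton, not_or] at hk
  exact ⟨k, hk.1, Ne.symm hk.2.1, Ne.symm hk.2.2⟩

lemma isResolvingPartition_starColour [Fintype V] (hG : G.Connected) {f : V × Bool → Fin n}
    (hf : Function.Injective f) (h : 4 ≤ n ∨ (3 ≤ n ∧ Fintype.card V = 1)) :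
    IsResolvingPartition (corona G (completeBipartiteGraph (Fin 1) (Fin n)))
      (Set.range fun k => {x | starColour f x = k}) := by
  obtain ⟨v₀⟩ := hG.nonempty
  refine isResolvingPartition_fibers (corona_connected hG) _
    (fun k => ⟨Sum.inr (v₀, Sum.inr k), rfl⟩) ?_
  intro x y hxy hN
  rcases hub_or_leaf x with ⟨p, rfl⟩ | ⟨v, j, rfl⟩ <;>
    rcases hub_or_leaf y with ⟨q, rfl⟩ | ⟨w, i, rfl⟩
  · rw [starColour_hub, starColour_hub] at hxy
    rw [hf hxy]
  · exfalso
    rw [starColour_hub] at hN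
    obtain ⟨k, hk, h1, h2⟩ := exists_missing_colour (f := f) h w p
    have := (exists_adj_leaf_iff f w i k).1 ((hN k hk).1 (exists_adj_hub f p k))
    tauto
  · exfalso
    rw [hxy, starColour_hub] at hN
    obtain ⟨k, hk, h1, h2⟩ := exists_missing_colour (f := f) h v q
    have := (exists_adj_leaf_iff f v j k).1 ((hN k hk).2 (exists_adj_hub f q k))
    tauto
  · have hji : j = i := hxy
    subst hji
    -- At least one of the two colours in the copy at `v` differs from `j`.
    obtain ⟨b, hb⟩ : ∃ b, f (v, b) ≠ j := by
      by_contra! hall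
      have := hf ((hall false).trans (hall true).symm)
      simp at this
    have h1 := (hN (f (v, b)) hb).1
    rw [exists_adj_leaf_iff, exists_adj_leaf_iff] at h1
    have h2 := h1 (by cases b <;> simp)
    have hvw : w = v := by
      rcases h2 with h2 | h2 <;> exact congrArg Prod.fst (hf h2)
    rw [hvw]

lemma le_ncard_of_isResolvingPartition [Finite V] (hG : G.Connected)
    {P : Set (Set (V ⊕ V × (Fin 1 ⊕ Fin n)))}
    (hP : IsResolvingPartition (corona G (completeBipartiteGraph (Fin 1) (Fin n))) P) :
    n ≤ P.ncard := by
  obtain ⟨v₀⟩ := hG.nonempty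
  choose cell hcell using fun x => (hP.2.1 x).exists
  let g : Fin n → Set (V ⊕ V × (Fin 1 ⊕ Fin n)) := fun j => cell (Sum.inr (v₀, Sum.inr j))
  have hg : Function.Injective g := by
    intro i j hij
    have hmem := (hcell (Sum.inr (v₀, Sum.inr j))).2
    have hij' : cell (Sum.inr (v₀, Sum.inr i)) = cell (Sum.inr (v₀, Sum.inr j)) := hij
    rw [← hij'] at hmem
    have := hP.eq_of_twins (corona_connected hG) (fun x => by rw [leaf_adj_iff, leaf_adj_iff])
      (hcell (Sum.inr (v₀, Sum.inr i))).1 (hcell _).2 hmem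
    simpa using this
  calc n = (Set.range g).ncard := by
        rw [← Set.image_univ, Set.ncard_image_of_injective _ hg, Set.ncard_univ, Nat.card_fin]
    _ ≤ P.ncard := Set.ncard_le_ncard (by rintro _ ⟨j, rfl⟩; exact (hcell _).1) (Set.toFinite P)

end Star

/-- Let `G` be a connected graph of order `n₁` and `n` an integer. If
`n ≥ 2n₁ ≥ 4` or `n > 2n₁ = 2`, then `pd(G⊙K_{1,n}) = n`. -/
theorem stmt7 {V : Type*} [Fintype V] (G : SimpleGraph V) (hG : G.Connected)
    (n₁ n : ℕ) (hn₁ : Fintype.card V = n₁)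
    (h : (n ≥ 2 * n₁ ∧ 2 * n₁ ≥ 4) ∨ (n > 2 * n₁ ∧ 2 * n₁ = 2)) :
    partitionDim (corona G (completeBipartiteGraph (Fin 1) (Fin n))) = n := by
  have hsize : 4 ≤ n ∨ (3 ≤ n ∧ Fintype.card V = 1) := by omega
  obtain ⟨f⟩ : Nonempty (V × Bool ↪ Fin n) := by
    apply Function.Embedding.nonempty_of_card_le
    simp only [Fintype.card_prod, Fintype.card_bool, Fintype.card_fin]
    omega
  obtain ⟨v₀⟩ := hG.nonempty
  have hmem : n ∈ {t | ∃ P, IsResolvingPartition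
      (corona G (completeBipartiteGraph (Fin 1) (Fin n))) P ∧ P.ncard = t} := by
    refine ⟨_, isResolvingPartition_starColour hG f.injective hsize, ?_⟩
    rw [← Set.image_univ, Set.ncard_image_of_injective, Set.ncard_univ, Nat.card_fin]
    intro i j hij
    have hi : (Sum.inr (v₀, Sum.inr i) : V ⊕ V × (Fin 1 ⊕ Fin n)) ∈
        {x | starColour f x = i} := rfl
    have hij' : {x | starColour f x = i} = {x | starColour f x = j} := hij
    rw [hij'] at hi
    exact hi
  refine le_antisymm (Nat.sInf_le hmem) (le_csInf ⟨n, hmem⟩ ?_)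
  rintro t ⟨P, hP, rfl⟩
  exact le_ncard_of_isResolvingPartition hG hP
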